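/- arXiv:1206.5953 — 7 statements merged into one kernel-verified Lean document; each statement's English description precedes it below -/
import Mathlib

section
/- Let X and Y be real Hilbert spaces, K : X → Y a continuous linear operator with adjoint K*, A a monotone set-valued operator on X and B a monotone set-valued operator on Y. Let σ, τ > 0 satisfy στ‖K‖² < 1, let (x̂, ŷ) solve the primal-dual system (5), and let (x^n), (y^n), (x̄^n) be generated by Algorithm 1. Then for every n ≥ 0 it holds ‖x^n − x̂‖²/(2τ) + (1 − στ‖K‖²)·‖y^n − ŷ‖²/(2σ) ≤ ‖x^0 − x̂‖²/(2τ) + ‖y^0 − ŷ‖²/(2σ); in particular the sequence (x^n, y^n) is bounded. -/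
/-!
With errors `a n = x n - xh`, `b n = y n - yh` and extrapolation increments `d n = xb n - x n`
(so `d 0 = 0` and `d (n+1) = x (n+1) - x n`), the energy
`‖a‖²/(2τ) + ‖b‖²/(2σ) + ‖d‖²/(2τ) + ⟪K d, b⟫` is nonincreasing in `n`. Adding the two monotonicity
inequalities between the iterate and the solution makes the coupling terms telescope, up to
`⟪K d n, b (n+1) - b n⟫`, which Young's inequality and `στ‖K‖² ≤ 1` absorb
(`pdEnergy_step`). The energy starts at `‖a 0‖²/(2τ) + ‖b 0‖²/(2σ)`, and Young's inequality with
weight `τ` bounds it below by the left-hand side of the claim (`le_pdEnergy`).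
-/

open RealInnerProductSpace Filter

/-- A set-valued operator, identified with its graph, is monotone. -/
def IsMonotoneOp {Z : Type*} [NormedAddCommGroup Z] [InnerProductSpace ℝ Z]
    (A : Set (Z × Z)) : Prop :=
  ∀ p ∈ A, ∀ q ∈ A, (0:ℝ) ≤ ⟪p.1 - q.1, p.2 - q.2⟫

/-- The energy of a primal error `a`, a dual error `b` and an extrapolation increment `d`. -/
noncomputable def pdEnergy {X Y : Type*} [NormedAddCommGroup X] [InnerProductSpace ℝ X]
    [NormedAddCommGroup Y] [InnerProductSpace ℝ Y] (K : X →L[ℝ] Y) (σ τ : ℝ)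
    (a d : X) (b : Y) : ℝ :=
  ‖a‖^2 / (2*τ) + ‖b‖^2 / (2*σ) + ‖d‖^2 / (2*τ) + ⟪K d, b⟫

/-- Cauchy–Schwarz and Young's inequality with weight `τ`. -/
lemma abs_inner_map_le {X Y : Type*} [NormedAddCommGroup X] [InnerProductSpace ℝ X]
    [NormedAddCommGroup Y] [InnerProductSpace ℝ Y] (K : X →L[ℝ] Y) {τ : ℝ} (hτ : 0 < τ)
    (d : X) (e : Y) : |⟪K d, e⟫| ≤ ‖d‖^2 / (2*τ) + τ * ‖K‖^2 * ‖e‖^2 / 2 := by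
  have h1 : |⟪K d, e⟫| ≤ ‖d‖ * (‖K‖ * ‖e‖) :=
    calc |⟪K d, e⟫| ≤ ‖K d‖ * ‖e‖ := abs_real_inner_le_norm _ _
      _ ≤ (‖K‖ * ‖d‖) * ‖e‖ := by gcongr; exact K.le_opNorm d
      _ = ‖d‖ * (‖K‖ * ‖e‖) := by ring
  have h2 : ‖d‖^2 / (2*τ) + τ * ‖K‖^2 * ‖e‖^2 / 2 - ‖d‖ * (‖K‖ * ‖e‖)
      = (‖d‖ - τ * (‖K‖ * ‖e‖))^2 / (2*τ) := by
    field_simp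
    ring
  have h3 : 0 ≤ (‖d‖ - τ * (‖K‖ * ‖e‖))^2 / (2*τ) := by positivity
  linarith

lemma le_pdEnergy {X Y : Type*} [NormedAddCommGroup X] [InnerProductSpace ℝ X]
    [NormedAddCommGroup Y] [InnerProductSpace ℝ Y] (K : X →L[ℝ] Y) {σ τ : ℝ} (hσ : 0 < σ)
    (hτ : 0 < τ) (a d : X) (b : Y) :
    ‖a‖^2 / (2*τ) + (1 - σ*τ*‖K‖^2) * (‖b‖^2 / (2*σ)) ≤ pdEnergy K σ τ a d b := by
  have h1 := (abs_le.mp (abs_inner_map_le K hτ d b)).1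
  have h2 : (1 - σ*τ*‖K‖^2) * (‖b‖^2 / (2*σ)) = ‖b‖^2 / (2*σ) - τ * ‖K‖^2 * ‖b‖^2 / 2 := by
    field_simp
  unfold pdEnergy
  linarith

/-- One step of the algorithm, in terms of errors, does not increase the energy. The hypotheses
`hA` and `hB` are the monotonicity inequalities between the new iterate and the solution. -/
lemma pdEnergy_step {X Y : Type*} [NormedAddCommGroup X] [InnerProductSpace ℝ X]
    [NormedAddCommGroup Y] [InnerProductSpace ℝ Y] (K : X →L[ℝ] Y) {σ τ : ℝ} (hσ : 0 < σ)
    (hτ : 0 < τ) (hστ : σ * τ * ‖K‖^2 ≤ 1) (a d a' : X) (b b' : Y)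
    (hA : 0 ≤ τ⁻¹ * ⟪a', a - a'⟫ - ⟪b', K a'⟫)
    (hB : 0 ≤ σ⁻¹ * ⟪b - b', b'⟫ + ⟪K (a + d), b'⟫) :
    pdEnergy K σ τ a' (a' - a) b' ≤ pdEnergy K σ τ a d b := by
  have eA : τ⁻¹ * ⟪a', a - a'⟫ = ‖a‖^2 / (2*τ) - ‖a'‖^2 / (2*τ) - ‖a' - a‖^2 / (2*τ) := by
    rw [norm_sub_sq_real, inner_sub_right, real_inner_self_eq_norm_sq]
    field_simp
    ring
  have eB : σ⁻¹ * ⟪b - b', b'⟫ = ‖b‖^2 / (2*σ) - ‖b'‖^2 / (2*σ) - ‖b' - b‖^2 / (2*σ) := by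
    rw [norm_sub_sq_real, inner_sub_left, real_inner_self_eq_norm_sq, real_inner_comm b' b]
    field_simp
    ring
  have hY : ⟪K d, b' - b⟫ ≤ ‖d‖^2 / (2*τ) + ‖b' - b‖^2 / (2*σ) := by
    have h1 := (abs_le.mp (abs_inner_map_le K hτ d (b' - b))).2
    have h2 : τ * ‖K‖^2 * ‖b' - b‖^2 / 2 = (σ * τ * ‖K‖^2) * (‖b' - b‖^2 / (2*σ)) := by
      field_simp
    have h3 : (σ * τ * ‖K‖^2) * (‖b' - b‖^2 / (2*σ)) ≤ ‖b' - b‖^2 / (2*σ) :=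
      mul_le_of_le_one_left (by positivity) hστ
    linarith
  rw [map_add, inner_add_left] at hB
  rw [inner_sub_right] at hY
  have hc := real_inner_comm b' (K a')
  unfold pdEnergy
  rw [map_sub, inner_sub_left]
  linarith

theorem stmt_0
    {X Y : Type*} [NormedAddCommGroup X] [InnerProductSpace ℝ X] [CompleteSpace X]
    [NormedAddCommGroup Y] [InnerProductSpace ℝ Y] [CompleteSpace Y]
    (K : X →L[ℝ] Y) (Kadj : Y →L[ℝ] X)
    (hadj : ∀ (x : X) (y : Y), ⟪Kadj y, x⟫ = ⟪y, K x⟫)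
    (A : Set (X × X)) (B : Set (Y × Y))
    (hA : IsMonotoneOp A) (hB : IsMonotoneOp B)
    (σ τ : ℝ) (hσ : 0 < σ) (hτ : 0 < τ) (hστ : σ * τ * ‖K‖^2 < 1)
    (xh : X) (yh : Y) (hsolB : (K xh, yh) ∈ B) (hsolA : (xh, -Kadj yh) ∈ A)
    (x xb : ℕ → X) (y : ℕ → Y)
    (hxb0 : xb 0 = x 0)
    (hy : ∀ n : ℕ, (σ⁻¹ • (y n + σ • K (xb n) - y (n+1)), y (n+1)) ∈ B)
    (hx : ∀ n : ℕ, (x (n+1), τ⁻¹ • (x n - τ • Kadj (y (n+1)) - x (n+1))) ∈ A)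
    (hxbn : ∀ n : ℕ, xb (n+1) = (2:ℝ) • x (n+1) - x n) :
    (∀ n : ℕ, ‖x n - xh‖^2 / (2*τ) + (1 - σ*τ*‖K‖^2) * (‖y n - yh‖^2 / (2*σ))
      ≤ ‖x 0 - xh‖^2 / (2*τ) + ‖y 0 - yh‖^2 / (2*σ)) ∧
    Bornology.IsBounded (Set.range (fun n : ℕ => (x n, y n))) := by
  have hstep : ∀ n, pdEnergy K σ τ (x (n+1) - xh) (xb (n+1) - x (n+1)) (y (n+1) - yh)
      ≤ pdEnergy K σ τ (x n - xh) (xb n - x n) (y n - yh) := by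
    intro n
    have hd : xb (n+1) - x (n+1) = (x (n+1) - xh) - (x n - xh) := by
      rw [hxbn, two_smul]
      abel
    rw [hd]
    refine pdEnergy_step K hσ hτ hστ.le _ _ _ _ _ ?_ ?_
    · have h := hA _ (hx n) _ hsolA
      have e : τ⁻¹ • (x n - τ • Kadj (y (n+1)) - x (n+1)) - -Kadj yh
          = τ⁻¹ • ((x n - xh) - (x (n+1) - xh)) - Kadj (y (n+1) - yh) := by
        rw [map_sub]
        simp only [smul_sub, inv_smul_smul₀ hτ.ne']
        abel
      dsimp only at h
      rwa [e, inner_sub_right, inner_smul_right,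
        ← real_inner_comm (x (n+1) - xh) (Kadj _), hadj] at h
    · have h := hB _ (hy n) _ hsolB
      have e : σ⁻¹ • (y n + σ • K (xb n) - y (n+1)) - K xh
          = σ⁻¹ • ((y n - yh) - (y (n+1) - yh)) + K ((x n - xh) + (xb n - x n)) := by
        simp only [map_sub, map_add, smul_sub, smul_add, inv_smul_smul₀ hσ.ne']
        abel
      dsimp only at h
      rwa [e, inner_add_left, real_inner_smul_left] at h
  have hmain : ∀ n : ℕ, ‖x n - xh‖^2 / (2*τ) + (1 - σ*τ*‖K‖^2) * (‖y n - yh‖^2 / (2*σ))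
      ≤ ‖x 0 - xh‖^2 / (2*τ) + ‖y 0 - yh‖^2 / (2*σ) := by
    intro n
    have h0 : pdEnergy K σ τ (x 0 - xh) (xb 0 - x 0) (y 0 - yh)
        = ‖x 0 - xh‖^2 / (2*τ) + ‖y 0 - yh‖^2 / (2*σ) := by
      simp [pdEnergy, hxb0]
    rw [← h0]
    exact (le_pdEnergy K hσ hτ _ (xb n - x n) _).trans
      (antitone_nat_of_succ_le
        (f := fun n => pdEnergy K σ τ (x n - xh) (xb n - x n) (y n - yh)) hstep n.zero_le)
  refine ⟨hmain, ?_⟩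
  set C := ‖x 0 - xh‖^2 / (2*τ) + ‖y 0 - yh‖^2 / (2*σ)
  have hs : 0 < 1 - σ*τ*‖K‖^2 := by linarith
  have hbx : ∀ n, x n ∈ Metric.closedBall xh (√(C * (2*τ))) := by
    intro n
    rw [mem_closedBall_iff_norm]
    apply Real.le_sqrt_of_sq_le
    rw [← div_le_iff₀ (by positivity)]
    have : 0 ≤ (1 - σ*τ*‖K‖^2) * (‖y n - yh‖^2 / (2*σ)) := by positivity
    linarith [hmain n]
  have hby : ∀ n, y n ∈ Metric.closedBall yh (√(C / (1 - σ*τ*‖K‖^2) * (2*σ))) := by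
    intro n
    rw [mem_closedBall_iff_norm]
    apply Real.le_sqrt_of_sq_le
    rw [← div_le_iff₀ (by positivity), le_div_iff₀' hs]
    have : 0 ≤ ‖x n - xh‖^2 / (2*τ) := by positivity
    linarith [hmain n]
  refine (Metric.isBounded_closedBall.prod Metric.isBounded_closedBall).subset
    (Set.range_subset_iff.mpr fun n => Set.mk_mem_prod (hbx n) (hby n))
end

section
/- Let X and Y be finite-dimensional real inner product spaces (hence Hilbert), K : X → Y a continuous linear operator with adjoint K*, A a maximally monotone set-valued operator on X and B a maximally monotone set-valued operator on Y. Let σ, τ > 0 satisfy στ‖K‖² < 1, assume the primal-dual system (5) has at least one solution, and let (x^n), (y^n), (x̄^n) be generated by Algorithm 1. Then there exists a pair (x*, y*) solving the system (5), i.e. (K x*, y*) ∈ B and (x*, −K* y*) ∈ A, such that x^n → x* and y^n → y* as n → ∞. -/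
/-!
Put `z n = (x n, y (n + 1))`. With this shift of the dual variable the algorithm is the proximal
point method for the monotone operator `(x, y) ↦ (A x + K* y, B⁻¹ y - K x)`, in the metric given by
the quadratic form `pdForm`, `Q (a, b) = ‖a‖² / τ + ‖b‖² / σ - 2 ⟪K a, b⟫`.
The condition `σ τ ‖K‖² < 1` makes `Q` positive definite (`exists_pdForm_ge`), and monotonicity
of `A` and `B` yields the Fejér inequality
`Q (z (n + 1) - ẑ) + Q (z n - z (n + 1)) ≤ Q (z n - ẑ)` for every solution `ẑ` (`pdForm_fejer`).
Hence `z` is bounded and `z n - z (n + 1) → 0`. By finite dimension `z` has a cluster point, which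
is a solution because graphs of maximally monotone operators are closed; the Fejér inequality
relative to that solution turns subsequential convergence into convergence of the whole sequence.
-/

open RealInnerProductSpace Filter

/-- A set-valued operator is maximally monotone. -/
def IsMaxMonotoneOp {Z : Type*} [NormedAddCommGroup Z] [InnerProductSpace ℝ Z]
    (A : Set (Z × Z)) : Prop :=
  IsMonotoneOp A ∧ ∀ B : Set (Z × Z), IsMonotoneOp B → A ⊆ B → B = A

/-- The graph of a maximally monotone operator contains every point monotonically related to it. -/
lemma IsMaxMonotoneOp.mem_of_related {Z : Type*} [NormedAddCommGroup Z] [InnerProductSpace ℝ Z]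
    {A : Set (Z × Z)} (hA : IsMaxMonotoneOp A) (p : Z × Z)
    (hp : ∀ q ∈ A, (0:ℝ) ≤ ⟪p.1 - q.1, p.2 - q.2⟫) : p ∈ A := by
  have hmono : IsMonotoneOp (insert p A) := by
    rintro q (rfl | hq) r (rfl | hr)
    · simp
    · exact hp r hr
    · have h := hp q hq
      rwa [← neg_sub q.1, ← neg_sub q.2, inner_neg_neg] at h
    · exact hA.1 q hq r hr
  rw [← hA.2 _ hmono (Set.subset_insert p A)]
  exact Set.mem_insert p A

lemma IsMaxMonotoneOp.mem_of_tendsto {Z : Type*} [NormedAddCommGroup Z] [InnerProductSpace ℝ Z]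
    {A : Set (Z × Z)} (hA : IsMaxMonotoneOp A) {u v : ℕ → Z} {a b : Z}
    (hu : Tendsto u atTop (nhds a)) (hv : Tendsto v atTop (nhds b))
    (h : ∀ n, (u n, v n) ∈ A) : (a, b) ∈ A := by
  refine hA.mem_of_related _ fun q hq => ?_
  exact ge_of_tendsto' ((hu.sub_const q.1).inner (hv.sub_const q.2))
    fun n => hA.1 _ (h n) q hq

/-- The quadratic form `‖a‖² / τ + ‖b‖² / σ - 2 ⟪K a, b⟫` on `X × Y`, whose associated metric
makes the primal-dual algorithm a proximal point method. -/
noncomputable def pdForm {X Y : Type*} [NormedAddCommGroup X] [InnerProductSpace ℝ X]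
    [NormedAddCommGroup Y] [InnerProductSpace ℝ Y] (K : X →L[ℝ] Y) (σ τ : ℝ) (a : X) (b : Y) : ℝ :=
  τ⁻¹ * ‖a‖ ^ 2 + σ⁻¹ * ‖b‖ ^ 2 - 2 * ⟪K a, b⟫

section
variable {X Y : Type*} [NormedAddCommGroup X] [InnerProductSpace ℝ X]
    [NormedAddCommGroup Y] [InnerProductSpace ℝ Y]

lemma exists_pdForm_ge (K : X →L[ℝ] Y) {σ τ : ℝ} (hσ : 0 < σ) (hτ : 0 < τ)
    (hστ : σ * τ * ‖K‖ ^ 2 < 1) :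
    ∃ c > 0, ∀ a b, c * (‖a‖ ^ 2 + ‖b‖ ^ 2) ≤ pdForm K σ τ a b := by
  -- With `s = ‖K‖ √(σ τ) < 1`, AM-GM gives `2 ‖K‖ ‖a‖ ‖b‖ ≤ s (‖a‖² / τ + ‖b‖² / σ)`.
  set p := Real.sqrt σ with hp
  set q := Real.sqrt τ with hq
  have hp0 : 0 < p := Real.sqrt_pos.2 hσ
  have hq0 : 0 < q := Real.sqrt_pos.2 hτ
  have hpσ : σ = p ^ 2 := (Real.sq_sqrt hσ.le).symm
  have hqτ : τ = q ^ 2 := (Real.sq_sqrt hτ.le).symm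
  have hs0 : 0 ≤ p * q * ‖K‖ := by positivity
  have hs1 : p * q * ‖K‖ < 1 := by
    rw [hpσ, hqτ] at hστ
    have : (p * q * ‖K‖) ^ 2 < 1 := by linarith [mul_pow (p * q) ‖K‖ 2, mul_pow p q 2]
    nlinarith
  refine ⟨(1 - p * q * ‖K‖) * min τ⁻¹ σ⁻¹,
    mul_pos (by linarith) (lt_min (inv_pos.2 hτ) (inv_pos.2 hσ)), fun a b => ?_⟩
  have hin : ⟪K a, b⟫ ≤ ‖K‖ * ‖a‖ * ‖b‖ :=
    (real_inner_le_norm _ _).trans (by gcongr; exact K.le_opNorm a)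
  have hamgm : 2 * (‖K‖ * ‖a‖ * ‖b‖) ≤ p * q * ‖K‖ * (τ⁻¹ * ‖a‖ ^ 2 + σ⁻¹ * ‖b‖ ^ 2) := by
    have h1 : p * q * ‖K‖ * (τ⁻¹ * ‖a‖ ^ 2 + σ⁻¹ * ‖b‖ ^ 2) - 2 * (‖K‖ * ‖a‖ * ‖b‖)
        = p * q * ‖K‖ * (‖a‖ / q - ‖b‖ / p) ^ 2 := by
      rw [hpσ, hqτ]; field_simp; ring
    have h2 : 0 ≤ p * q * ‖K‖ * (‖a‖ / q - ‖b‖ / p) ^ 2 := by positivity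
    linarith
  have hmin : min τ⁻¹ σ⁻¹ * (‖a‖ ^ 2 + ‖b‖ ^ 2) ≤ τ⁻¹ * ‖a‖ ^ 2 + σ⁻¹ * ‖b‖ ^ 2 := by
    rw [mul_add]
    gcongr
    · exact min_le_left _ _
    · exact min_le_right _ _
  have := mul_le_mul_of_nonneg_left hmin (sub_nonneg.2 hs1.le)
  unfold pdForm
  linarith

/-- Fejér inequality for one step `(x₀, y₀) ↦ (x₁, y₁)` relative to a solution `(xh, yh)`. -/
lemma pdForm_fejer (K : X →L[ℝ] Y) (Kadj : Y →L[ℝ] X)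
    (hadj : ∀ (x : X) (y : Y), ⟪Kadj y, x⟫ = ⟪y, K x⟫)
    {A : Set (X × X)} {B : Set (Y × Y)} (hA : IsMonotoneOp A) (hB : IsMonotoneOp B)
    {σ τ : ℝ} {xh x₀ x₁ : X} {yh y₀ y₁ : Y}
    (hBh : (K xh, yh) ∈ B) (hAh : (xh, -Kadj yh) ∈ A)
    (hA₁ : (x₁, τ⁻¹ • (x₀ - x₁) - Kadj y₀) ∈ A)
    (hB₁ : (σ⁻¹ • (y₀ - y₁) + K ((2:ℝ) • x₁ - x₀), y₁) ∈ B) :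
    pdForm K σ τ (x₁ - xh) (y₁ - yh) + pdForm K σ τ (x₀ - x₁) (y₀ - y₁) ≤
      pdForm K σ τ (x₀ - xh) (y₀ - yh) := by
  have h1 := hA _ hA₁ _ hAh
  have h2 := hB _ hB₁ _ hBh
  -- All points are expressed through the error `(a, b)` of the new iterate and the step `(d, e)`.
  obtain ⟨a, rfl⟩ : ∃ a, x₁ = xh + a := ⟨x₁ - xh, by abel⟩
  obtain ⟨d, rfl⟩ : ∃ d, x₀ = xh + a + d := ⟨x₀ - (xh + a), by abel⟩
  obtain ⟨b, rfl⟩ : ∃ b, y₁ = yh + b := ⟨y₁ - yh, by abel⟩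
  obtain ⟨e, rfl⟩ : ∃ e, y₀ = yh + b + e := ⟨y₀ - (yh + b), by abel⟩
  have e1 : τ⁻¹ • (xh + a + d - (xh + a)) - Kadj (yh + b + e) - -Kadj yh
      = τ⁻¹ • d - Kadj b - Kadj e := by
    simp only [map_add, add_sub_cancel_left]; abel
  have e2 : σ⁻¹ • (yh + b + e - (yh + b)) + K ((2:ℝ) • (xh + a) - (xh + a + d)) - K xh
      = σ⁻¹ • e + K a - K d := by
    simp only [two_smul, map_add, map_sub, add_sub_cancel_left]; abel
  dsimp only at h1 h2
  rw [e1, add_sub_cancel_left] at h1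
  rw [e2, add_sub_cancel_left] at h2
  have e3 : xh + a + d - xh = a + d := by abel
  have e4 : yh + b + e - yh = b + e := by abel
  simp only [pdForm, e3, e4, add_sub_cancel_left, norm_add_sq_real, map_add, inner_add_left,
    inner_add_right]
  simp only [inner_sub_right, inner_sub_left, inner_add_left, real_inner_smul_left,
    real_inner_smul_right] at h1 h2
  have c1 : ⟪a, Kadj b⟫ = ⟪K a, b⟫ := by rw [real_inner_comm, hadj, real_inner_comm]
  have c2 : ⟪a, Kadj e⟫ = ⟪K a, e⟫ := by rw [real_inner_comm, hadj, real_inner_comm]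
  rw [c1, c2] at h1
  rw [real_inner_comm b e] at h2
  linarith

lemma tendsto_zero_of_pdForm {K : X →L[ℝ] Y} {σ τ c : ℝ} (hc : 0 < c)
    (hQ : ∀ a b, c * (‖a‖ ^ 2 + ‖b‖ ^ 2) ≤ pdForm K σ τ a b) {u : ℕ → X} {v : ℕ → Y}
    (h : Tendsto (fun n => pdForm K σ τ (u n) (v n)) atTop (nhds 0)) :
    Tendsto u atTop (nhds 0) ∧ Tendsto v atTop (nhds 0) := by
  have h' : Tendsto (fun n => √(pdForm K σ τ (u n) (v n) / c)) atTop (nhds 0) := by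
    simpa using (h.div_const c).sqrt
  constructor <;> refine squeeze_zero_norm (fun n => Real.le_sqrt_of_sq_le ?_) h' <;>
    rw [le_div_iff₀ hc] <;>
    nlinarith [hQ (u n) (v n), mul_nonneg hc.le (sq_nonneg ‖u n‖),
      mul_nonneg hc.le (sq_nonneg ‖v n‖)]

end

theorem stmt_1
    {X Y : Type*} [NormedAddCommGroup X] [InnerProductSpace ℝ X] [FiniteDimensional ℝ X]
    [NormedAddCommGroup Y] [InnerProductSpace ℝ Y] [FiniteDimensional ℝ Y]
    (K : X →L[ℝ] Y) (Kadj : Y →L[ℝ] X)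
    (hadj : ∀ (x : X) (y : Y), ⟪Kadj y, x⟫ = ⟪y, K x⟫)
    (A : Set (X × X)) (B : Set (Y × Y))
    (hA : IsMaxMonotoneOp A) (hB : IsMaxMonotoneOp B)
    (σ τ : ℝ) (hσ : 0 < σ) (hτ : 0 < τ) (hστ : σ * τ * ‖K‖^2 < 1)
    (hsol : ∃ (xh : X) (yh : Y), (K xh, yh) ∈ B ∧ (xh, -Kadj yh) ∈ A)
    (x xb : ℕ → X) (y : ℕ → Y)
    (hxb0 : xb 0 = x 0)
    (hy : ∀ n : ℕ, (σ⁻¹ • (y n + σ • K (xb n) - y (n+1)), y (n+1)) ∈ B)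
    (hx : ∀ n : ℕ, (x (n+1), τ⁻¹ • (x n - τ • Kadj (y (n+1)) - x (n+1))) ∈ A)
    (hxbn : ∀ n : ℕ, xb (n+1) = (2:ℝ) • x (n+1) - x n) :
    ∃ (xs : X) (ys : Y), (K xs, ys) ∈ B ∧ (xs, -Kadj ys) ∈ A ∧
      Tendsto x atTop (nhds xs) ∧ Tendsto y atTop (nhds ys) := by
  obtain ⟨xh, yh, hBh, hAh⟩ := hsol
  obtain ⟨c, hc, hQ⟩ := exists_pdForm_ge K hσ hτ hστ
  have hQ0 : ∀ a b, 0 ≤ pdForm K σ τ a b := fun a b => le_trans (by positivity) (hQ a b)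
  have hA₁ : ∀ n, (x (n+1), τ⁻¹ • (x n - x (n+1)) - Kadj (y (n+1))) ∈ A := fun n => by
    convert hx n using 2
    rw [sub_right_comm, smul_sub _ _ (τ • _), inv_smul_smul₀ hτ.ne']
  have hB₁ : ∀ n, (σ⁻¹ • (y (n+1) - y (n+1+1)) + K ((2:ℝ) • x (n+1) - x n), y (n+1+1)) ∈ B :=
    fun n => by
      convert hy (n+1) using 2
      rw [hxbn, add_sub_right_comm, smul_add, inv_smul_smul₀ hσ.ne']
  have hfejer : ∀ (x' : X) (y' : Y), (K x', y') ∈ B → (x', -Kadj y') ∈ A → ∀ n,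
      pdForm K σ τ (x (n+1) - x') (y (n+1+1) - y') +
        pdForm K σ τ (x n - x (n+1)) (y (n+1) - y (n+1+1)) ≤
      pdForm K σ τ (x n - x') (y (n+1) - y') := fun x' y' hB' hA' n =>
    pdForm_fejer K Kadj hadj hA.1 hB.1 hB' hA' (hA₁ n) (hB₁ n)
  have hlim : ∀ (x' : X) (y' : Y), (K x', y') ∈ B → (x', -Kadj y') ∈ A →
      Antitone (fun n => pdForm K σ τ (x n - x') (y (n+1) - y')) ∧
      ∃ l, Tendsto (fun n => pdForm K σ τ (x n - x') (y (n+1) - y')) atTop (nhds l) := by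
    intro x' y' hB' hA'
    have hanti : Antitone (fun n => pdForm K σ τ (x n - x') (y (n+1) - y')) :=
      antitone_nat_of_succ_le fun n => by
        linarith [hfejer x' y' hB' hA' n, hQ0 (x n - x (n+1)) (y (n+1) - y (n+1+1))]
    exact ⟨hanti, _, tendsto_atTop_ciInf hanti ⟨0, by rintro _ ⟨n, rfl⟩; exact hQ0 _ _⟩⟩
  obtain ⟨hanti, l, hl⟩ := hlim xh yh hBh hAh
  have hstep : Tendsto (fun n => pdForm K σ τ (x n - x (n+1)) (y (n+1) - y (n+1+1)))
      atTop (nhds 0) := by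
    have hdiff := hl.sub (hl.comp (tendsto_add_atTop_nat 1))
    rw [sub_self] at hdiff
    refine squeeze_zero (fun n => hQ0 _ _) (fun n => ?_) hdiff
    have := hfejer xh yh hBh hAh n
    simp only [Function.comp]
    linarith
  obtain ⟨hdx, hdy⟩ := tendsto_zero_of_pdForm hc hQ hstep
  -- The shifted sequence stays in a closed ball around `(xh, yh)`, hence has a cluster point.
  set R := √(pdForm K σ τ (x 0 - xh) (y 1 - yh) / c) with hR
  have hball : ∀ n, (x n, y (n+1)) ∈ Metric.closedBall (xh, yh) R := by
    intro n
    have h1 := hQ (x n - xh) (y (n+1) - yh)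
    have h2 : pdForm K σ τ (x n - xh) (y (n+1) - yh) ≤ pdForm K σ τ (x 0 - xh) (y 1 - yh) :=
      hanti (Nat.zero_le n)
    have h3 := mul_nonneg hc.le (sq_nonneg ‖x n - xh‖)
    have h4 := mul_nonneg hc.le (sq_nonneg ‖y (n+1) - yh‖)
    rw [Metric.mem_closedBall, Prod.dist_eq, dist_eq_norm, dist_eq_norm]
    refine max_le ?_ ?_ <;> refine Real.le_sqrt_of_sq_le ?_ <;> rw [le_div_iff₀ hc] <;>
      simp only <;> linarith
  have : ProperSpace X := FiniteDimensional.proper ℝ X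
  have : ProperSpace Y := FiniteDimensional.proper ℝ Y
  obtain ⟨⟨xs, ys⟩, -, φ, hφ, hconv⟩ := (isCompact_closedBall (xh, yh) R).tendsto_subseq hball
  have hcx : Tendsto (fun k => x (φ k)) atTop (nhds xs) :=
    (continuous_fst.tendsto _).comp hconv
  have hcy : Tendsto (fun k => y (φ k + 1)) atTop (nhds ys) :=
    (continuous_snd.tendsto _).comp hconv
  have hdx' := hdx.comp hφ.tendsto_atTop
  have hdy' := hdy.comp hφ.tendsto_atTop
  have hcx1 : Tendsto (fun k => x (φ k + 1)) atTop (nhds xs) := by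
    simpa [Function.comp_def] using hcx.sub hdx'
  have hcy1 : Tendsto (fun k => y (φ k + 1 + 1)) atTop (nhds ys) := by
    simpa [Function.comp_def] using hcy.sub hdy'
  have hAs : (xs, -Kadj ys) ∈ A := by
    refine hA.mem_of_tendsto hcx1 ?_ fun k => hA₁ (φ k)
    simpa [Function.comp_def] using (hdx'.const_smul τ⁻¹).sub ((Kadj.continuous.tendsto ys).comp hcy)
  have hBs : (K xs, ys) ∈ B := by
    refine hB.mem_of_tendsto ?_ hcy1 fun k => hB₁ (φ k)
    have h1 : Tendsto (fun k => (2:ℝ) • x (φ k + 1) - x (φ k)) atTop (nhds xs) := by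
      have := (hcx1.const_smul (2:ℝ)).sub hcx
      rwa [two_smul, add_sub_cancel_right] at this
    simpa only [Function.comp_def, smul_zero, zero_add] using
      (hdy'.const_smul σ⁻¹).add ((K.continuous.tendsto xs).comp h1)
  obtain ⟨-, m, hm⟩ := hlim xs ys hBs hAs
  -- The distance to `(xs, ys)` converges, and its limit is read off along the subsequence.
  have hm0 : m = 0 := by
    refine tendsto_nhds_unique (hm.comp hφ.tendsto_atTop) ?_
    have hx0 : Tendsto (fun k => x (φ k) - xs) atTop (nhds 0) := by
      simpa using hcx.sub_const xs
    have hy0 : Tendsto (fun k => y (φ k + 1) - ys) atTop (nhds 0) := by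
      simpa using hcy.sub_const ys
    have h := (((hx0.norm.pow 2).const_mul τ⁻¹).add ((hy0.norm.pow 2).const_mul σ⁻¹)).sub
      ((((K.continuous.tendsto 0).comp hx0).inner hy0).const_mul 2)
    simpa [pdForm, Function.comp_def] using h
  rw [hm0] at hm
  obtain ⟨hxl, hyl⟩ := tendsto_zero_of_pdForm hc hQ hm
  refine ⟨xs, ys, hBs, hAs, tendsto_sub_nhds_zero_iff.1 hxl, ?_⟩
  exact (tendsto_add_atTop_iff_nat 1).1 (tendsto_sub_nhds_zero_iff.1 hyl)
end

section
/- Let X and Y be real inner product spaces, K : X → Y a continuous linear operator with adjoint K*, A a monotone set-valued operator on X and τ > 0. Suppose (x̂, −K* ŷ) ∈ A and that the pair (p, τ^{-1}(x − τK* q − p)) belongs to A, where x, p ∈ X and q, ŷ ∈ Y. Then ‖p − x̂‖²/(2τ) ≤ −‖p − x‖²/(2τ) + ‖x − x̂‖²/(2τ) + ⟨K(p − x̂), ŷ − q⟩. -/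
/-! Monotonicity of `A` at the two given points of its graph reads
`0 ≤ τ⁻¹ * ⟪p - xh, x - p⟫ + ⟪K (p - xh), yh - q⟫`, and expanding `‖(p - xh) + (x - p)‖ ^ 2`
expresses the first inner product through the three squared distances. -/

open RealInnerProductSpace

theorem stmt_2
    {X Y : Type*} [NormedAddCommGroup X] [InnerProductSpace ℝ X]
    [NormedAddCommGroup Y] [InnerProductSpace ℝ Y]
    (K : X →L[ℝ] Y) (Kadj : Y →L[ℝ] X)
    (hadj : ∀ (x : X) (y : Y), ⟪Kadj y, x⟫ = ⟪y, K x⟫)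
    (A : Set (X × X)) (hA : IsMonotoneOp A)
    (τ : ℝ) (hτ : 0 < τ)
    (xh p x : X) (q yh : Y)
    (hsol : (xh, -Kadj yh) ∈ A)
    (hstep : (p, τ⁻¹ • (x - τ • Kadj q - p)) ∈ A) :
    ‖p - xh‖^2 / (2*τ) ≤ -(‖p - x‖^2 / (2*τ)) + ‖x - xh‖^2 / (2*τ)
      + ⟪K (p - xh), yh - q⟫ := by
  have hmono := hA _ hstep _ hsol
  have hvec : τ⁻¹ • (x - τ • Kadj q - p) - -Kadj yh = τ⁻¹ • (x - p) + Kadj (yh - q) := by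
    rw [map_sub, show x - τ • Kadj q - p = (x - p) - τ • Kadj q by abel, smul_sub,
      inv_smul_smul₀ hτ.ne']
    abel
  have hK : ⟪p - xh, Kadj (yh - q)⟫ = ⟪K (p - xh), yh - q⟫ := by
    rw [real_inner_comm, hadj, real_inner_comm]
  rw [hvec, inner_add_right, inner_smul_right, hK] at hmono
  -- The three-point identity turns the inner product into the three squared distances.
  have hsq : ‖x - xh‖ ^ 2 = ‖p - xh‖ ^ 2 + 2 * ⟪p - xh, x - p⟫ + ‖p - x‖ ^ 2 := by
    rw [norm_sub_rev p x, ← norm_add_sq_real]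
    congr 2
    abel
  have hdiv : τ⁻¹ * ⟪p - xh, x - p⟫
      = -(‖p - x‖ ^ 2 / (2 * τ)) + ‖x - xh‖ ^ 2 / (2 * τ) - ‖p - xh‖ ^ 2 / (2 * τ) := by
    rw [hsq]
    field_simp
    ring
  linarith
end

section
/- Let X and Y be real inner product spaces, K : X → Y a continuous linear operator, B a monotone set-valued operator on Y and σ > 0. Suppose (K x̂, ŷ) ∈ B and that the pair (σ^{-1}(y + σK w − q), q) belongs to B, where y, q, ŷ ∈ Y and w, x̂ ∈ X. Then ‖q − ŷ‖²/(2σ) ≤ −‖q − y‖²/(2σ) + ‖y − ŷ‖²/(2σ) + ⟨K(w − x̂), q − ŷ⟩. -/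
/-!
Monotonicity of `B` at its two given points reads
`0 ≤ σ⁻¹ ⟪y - q, q - yh⟫ + ⟪K (w - xh), q - yh⟫`. Expanding `‖(y - q) + (q - yh)‖ ^ 2` expresses
the first inner product through the three squared norms, which is the claimed estimate.
-/

open RealInnerProductSpace

theorem stmt_3
    {X Y : Type*} [NormedAddCommGroup X] [InnerProductSpace ℝ X]
    [NormedAddCommGroup Y] [InnerProductSpace ℝ Y]
    (K : X →L[ℝ] Y)
    (B : Set (Y × Y)) (hB : IsMonotoneOp B)
    (σ : ℝ) (hσ : 0 < σ)
    (xh w : X) (y q yh : Y)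
    (hsol : (K xh, yh) ∈ B)
    (hstep : (σ⁻¹ • (y + σ • K w - q), q) ∈ B) :
    ‖q - yh‖^2 / (2*σ) ≤ -(‖q - y‖^2 / (2*σ)) + ‖y - yh‖^2 / (2*σ)
      + ⟪K (w - xh), q - yh⟫ := by
  have hmono := hB _ hstep _ hsol
  have hsplit : σ⁻¹ • (y + σ • K w - q) - K xh = σ⁻¹ • (y - q) + K (w - xh) := by
    rw [add_sub_right_comm, smul_add, inv_smul_smul₀ hσ.ne', map_sub]
    abel
  simp only [hsplit, inner_add_left, real_inner_smul_left] at hmono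
  -- Three-point identity, from `y - yh = (y - q) + (q - yh)`.
  have hthree := norm_add_sq_real (y - q) (q - yh)
  rw [sub_add_sub_cancel, norm_sub_rev y q] at hthree
  have hdiv : ‖y - yh‖^2 / (2*σ)
      = ‖q - y‖^2 / (2*σ) + σ⁻¹ * ⟪y - q, q - yh⟫ + ‖q - yh‖^2 / (2*σ) := by
    rw [hthree]
    field_simp
  linarith
end

section
/- Let X and Y be real Hilbert spaces, K : X → Y a continuous linear operator with adjoint K*, A a monotone set-valued operator on X and B a monotone set-valued operator on Y. Let σ, τ > 0 satisfy στ‖K‖² < 1, let (x̂, ŷ) solve the primal-dual system (5), and let (x^n), (y^n), (x̄^n) be generated by Algorithm 1. Then for every integer N ≥ 2 it holds ‖x^N − x̂‖²/(2τ) + (1 − στ‖K‖²)·‖y^N − ŷ‖²/(2σ) + (1 − √(στ)‖K‖)·Σ_{n=1}^{N} ‖y^n − y^{n−1}‖²/(2σ) + (1 − √(στ)‖K‖)·Σ_{n=1}^{N−1} ‖x^n − x^{n−1}‖²/(2τ) ≤ ‖x^0 − x̂‖²/(2τ) + ‖y^0 − ŷ‖²/(2σ). -/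
/-!
Testing monotonicity of `A` and `B` between an iterate and the solution and adding the two
inequalities gives a one-step decrease of `‖x n - xh‖² / (2τ) + ‖y n - yh‖² / (2σ)`, up to the cross
term `⟪K (xb n - x (n+1)), y (n+1) - yh⟫` (`one_step`). Because of the extrapolation
`xb n = 2 x n - x (n-1)`, this term telescopes except for `⟪K (x n - x (n-1)), y (n+1) - y n⟫`, which
Young's inequality (`inner_le_young`) bounds by `√(στ)‖K‖` times the available squared increments.
The telescoped boundary term `⟪K (x N - x (N-1)), y N - yh⟫` is absorbed by a weighted Young
inequality at the cost of the factor `1 - στ‖K‖²` in front of `‖y N - yh‖²`.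
-/

open RealInnerProductSpace Filter

/-- The decrease obtained from monotonicity in one iteration: `x, y` are the old iterates, `z` is the
extrapolated point and `x', y'` are the new iterates. -/
lemma one_step {X Y : Type*} [NormedAddCommGroup X] [InnerProductSpace ℝ X]
    [NormedAddCommGroup Y] [InnerProductSpace ℝ Y]
    (K : X →L[ℝ] Y) (Kadj : Y →L[ℝ] X)
    (hadj : ∀ (x : X) (y : Y), ⟪Kadj y, x⟫ = ⟪y, K x⟫)
    {A : Set (X × X)} {B : Set (Y × Y)} (hA : IsMonotoneOp A) (hB : IsMonotoneOp B)
    {σ τ : ℝ} (hσ : 0 < σ) (hτ : 0 < τ)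
    {xh : X} {yh : Y} (hsolB : (K xh, yh) ∈ B) (hsolA : (xh, -Kadj yh) ∈ A)
    {x x' z : X} {y y' : Y}
    (hy : (σ⁻¹ • (y + σ • K z - y'), y') ∈ B)
    (hx : (x', τ⁻¹ • (x - τ • Kadj y' - x')) ∈ A) :
    ‖x' - xh‖^2 / (2*τ) + ‖y' - yh‖^2 / (2*σ) + ‖y' - y‖^2 / (2*σ) + ‖x' - x‖^2 / (2*τ)
      ≤ ‖x - xh‖^2 / (2*τ) + ‖y - yh‖^2 / (2*σ) + ⟪K (z - x'), y' - yh⟫ := by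
  have h1 := hB _ hy _ hsolB
  have h2 := hA _ hx _ hsolA
  have e1 : σ⁻¹ • (y + σ • K z - y') - K xh
      = -(σ⁻¹ • (y' - y)) + K (z - x') + K (x' - xh) := by
    simp only [map_sub, smul_sub, smul_add, inv_smul_smul₀ hσ.ne']
    abel
  have e2 : τ⁻¹ • (x - τ • Kadj y' - x') - -Kadj yh
      = -(τ⁻¹ • (x' - x)) - Kadj (y' - yh) := by
    simp only [map_sub, smul_sub, inv_smul_smul₀ hτ.ne']
    abel
  simp only [e1] at h1
  simp only [e2] at h2
  rw [inner_add_left, inner_add_left, inner_neg_left, real_inner_smul_left] at h1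
  rw [inner_sub_right, inner_neg_right, real_inner_smul_right,
    real_inner_comm (Kadj _) (x' - xh), hadj, real_inner_comm (K _) (y' - yh)] at h2
  have ey : ‖y - yh‖^2 = ‖y' - yh‖^2 - 2 * ⟪y' - y, y' - yh⟫ + ‖y' - y‖^2 := by
    rw [show y - yh = (y' - yh) - (y' - y) by abel, norm_sub_sq_real, real_inner_comm]
  have ex : ‖x - xh‖^2 = ‖x' - xh‖^2 - 2 * ⟪x' - xh, x' - x⟫ + ‖x' - x‖^2 := by
    rw [show x - xh = (x' - xh) - (x' - x) by abel, norm_sub_sq_real]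
  have fy : ‖y - yh‖^2 / (2*σ) = ‖y' - yh‖^2 / (2*σ) - σ⁻¹ * ⟪y' - y, y' - yh⟫
      + ‖y' - y‖^2 / (2*σ) := by
    rw [ey]; field_simp
  have fx : ‖x - xh‖^2 / (2*τ) = ‖x' - xh‖^2 / (2*τ) - τ⁻¹ * ⟪x' - xh, x' - x⟫
      + ‖x' - x‖^2 / (2*τ) := by
    rw [ex]; field_simp
  linarith

lemma neg_inner_le_mul_norm {X Y : Type*} [NormedAddCommGroup X] [InnerProductSpace ℝ X]
    [NormedAddCommGroup Y] [InnerProductSpace ℝ Y] (K : X →L[ℝ] Y) (u : X) (v : Y) :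
    -⟪K u, v⟫ ≤ ‖K‖ * ‖u‖ * ‖v‖ :=
  (neg_le_abs _).trans ((abs_real_inner_le_norm _ _).trans
    (mul_le_mul_of_nonneg_right (K.le_opNorm u) (norm_nonneg v)))

/-- Young's inequality with weights balanced between the two step sizes. -/
lemma inner_le_young {X Y : Type*} [NormedAddCommGroup X] [InnerProductSpace ℝ X]
    [NormedAddCommGroup Y] [InnerProductSpace ℝ Y] (K : X →L[ℝ] Y)
    {σ τ : ℝ} (hσ : 0 < σ) (hτ : 0 < τ) (u : X) (v : Y) :
    ⟪K u, v⟫ ≤ Real.sqrt (σ*τ) * ‖K‖ * (‖u‖^2 / (2*τ) + ‖v‖^2 / (2*σ)) := by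
  have h := neg_inner_le_mul_norm K u (-v)
  rw [inner_neg_right, neg_neg, norm_neg] at h
  refine h.trans ?_
  obtain ⟨s, hs, rfl⟩ : ∃ s : ℝ, 0 < s ∧ s^2 = σ := ⟨_, Real.sqrt_pos.2 hσ, Real.sq_sqrt hσ.le⟩
  obtain ⟨t, ht, rfl⟩ : ∃ t : ℝ, 0 < t ∧ t^2 = τ := ⟨_, Real.sqrt_pos.2 hτ, Real.sq_sqrt hτ.le⟩
  rw [← mul_pow, Real.sqrt_sq (by positivity)]
  have key : s * t * ‖K‖ * (‖u‖^2 / (2*t^2) + ‖v‖^2 / (2*s^2)) - ‖K‖ * ‖u‖ * ‖v‖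
      = ‖K‖ * (s * ‖u‖ - t * ‖v‖)^2 / (2 * s * t) := by
    field_simp
    ring
  have : 0 ≤ ‖K‖ * (s * ‖u‖ - t * ‖v‖)^2 / (2 * s * t) := by positivity
  linarith

/-- Young's inequality with the whole weight `στ‖K‖²` put on the dual variable. -/
lemma neg_inner_le_young {X Y : Type*} [NormedAddCommGroup X] [InnerProductSpace ℝ X]
    [NormedAddCommGroup Y] [InnerProductSpace ℝ Y] (K : X →L[ℝ] Y)
    {σ τ : ℝ} (hσ : 0 < σ) (hτ : 0 < τ) (u : X) (v : Y) :
    -⟪K u, v⟫ ≤ ‖u‖^2 / (2*τ) + σ*τ*‖K‖^2 * (‖v‖^2 / (2*σ)) := by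
  refine (neg_inner_le_mul_norm K u v).trans ?_
  have key : ‖u‖^2 / (2*τ) + σ*τ*‖K‖^2 * (‖v‖^2 / (2*σ)) - ‖K‖ * ‖u‖ * ‖v‖
      = (‖u‖ - τ * ‖K‖ * ‖v‖)^2 / (2*τ) := by
    field_simp
    ring
  have : 0 ≤ (‖u‖ - τ * ‖K‖ * ‖v‖)^2 / (2*τ) := by positivity
  linarith

theorem stmt_4
    {X Y : Type*} [NormedAddCommGroup X] [InnerProductSpace ℝ X] [CompleteSpace X]
    [NormedAddCommGroup Y] [InnerProductSpace ℝ Y] [CompleteSpace Y]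
    (K : X →L[ℝ] Y) (Kadj : Y →L[ℝ] X)
    (hadj : ∀ (x : X) (y : Y), ⟪Kadj y, x⟫ = ⟪y, K x⟫)
    (A : Set (X × X)) (B : Set (Y × Y))
    (hA : IsMonotoneOp A) (hB : IsMonotoneOp B)
    (σ τ : ℝ) (hσ : 0 < σ) (hτ : 0 < τ) (hστ : σ * τ * ‖K‖^2 < 1)
    (xh : X) (yh : Y) (hsolB : (K xh, yh) ∈ B) (hsolA : (xh, -Kadj yh) ∈ A)
    (x xb : ℕ → X) (y : ℕ → Y)
    (hxb0 : xb 0 = x 0)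
    (hy : ∀ n : ℕ, (σ⁻¹ • (y n + σ • K (xb n) - y (n+1)), y (n+1)) ∈ B)
    (hx : ∀ n : ℕ, (x (n+1), τ⁻¹ • (x n - τ • Kadj (y (n+1)) - x (n+1))) ∈ A)
    (hxbn : ∀ n : ℕ, xb (n+1) = (2:ℝ) • x (n+1) - x n) :
    ∀ N : ℕ, 2 ≤ N →
      ‖x N - xh‖^2 / (2*τ) + (1 - σ*τ*‖K‖^2) * (‖y N - yh‖^2 / (2*σ))
      + (1 - Real.sqrt (σ*τ) * ‖K‖) * ∑ n ∈ Finset.Icc 1 N, ‖y n - y (n-1)‖^2 / (2*σ)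
      + (1 - Real.sqrt (σ*τ) * ‖K‖) * ∑ n ∈ Finset.Icc 1 (N-1), ‖x n - x (n-1)‖^2 / (2*τ)
      ≤ ‖x 0 - xh‖^2 / (2*τ) + ‖y 0 - yh‖^2 / (2*σ) := by
  have step := fun n => one_step K Kadj hadj hA hB hσ hτ hsolB hsolA (hy n) (hx n)
  set c := Real.sqrt (σ*τ) * ‖K‖ with hc
  have hc0 : 0 ≤ c := by positivity
  -- The telescoped estimate at `N = M + 1`, before the boundary cross term is absorbed.
  have inv : ∀ M : ℕ,
      ‖x (M+1) - xh‖^2 / (2*τ) + ‖y (M+1) - yh‖^2 / (2*σ)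
      + (1 - c) * ∑ n ∈ Finset.Icc 1 (M+1), ‖y n - y (n-1)‖^2 / (2*σ)
      + (1 - c) * ∑ n ∈ Finset.Icc 1 M, ‖x n - x (n-1)‖^2 / (2*τ)
      + ‖x (M+1) - x M‖^2 / (2*τ) + ⟪K (x (M+1) - x M), y (M+1) - yh⟫
      ≤ ‖x 0 - xh‖^2 / (2*τ) + ‖y 0 - yh‖^2 / (2*σ) := by
    intro M
    induction M with
    | zero =>
      have h := step 0
      rw [hxb0, ← neg_sub (x (0+1)) (x 0), map_neg, inner_neg_left] at h
      have hp : 0 ≤ c * (‖y (0+1) - y 0‖^2 / (2*σ)) := by positivity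
      simp only [zero_add, Finset.Icc_self, Finset.sum_singleton, Nat.sub_self,
        Finset.Icc_eq_empty_of_lt Nat.zero_lt_one, Finset.sum_empty] at h hp ⊢
      linarith
    | succ M ih =>
      have h := step (M+1)
      have e : ⟪K (xb (M+1) - x (M+1+1)), y (M+1+1) - yh⟫
          = ⟪K (x (M+1) - x M), y (M+1) - yh⟫
            + ⟪K (x (M+1) - x M), y (M+1+1) - y (M+1)⟫
            - ⟪K (x (M+1+1) - x (M+1)), y (M+1+1) - yh⟫ := by
        rw [← inner_add_right, show y (M+1) - yh + (y (M+1+1) - y (M+1)) = y (M+1+1) - yh by abel,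
          ← inner_sub_left, ← map_sub, hxbn, two_smul]
        congr 2
        abel_nf
      have hyo := inner_le_young K hσ hτ (x (M+1) - x M) (y (M+1+1) - y (M+1))
      rw [← hc] at hyo
      rw [Finset.sum_Icc_succ_top (by omega : 1 ≤ M+1+1),
        Finset.sum_Icc_succ_top (by omega : 1 ≤ M+1) (fun n => ‖x n - x (n-1)‖^2 / (2*τ))]
      simp only [Nat.add_sub_cancel]
      linarith
  intro N hN
  obtain ⟨M, rfl⟩ : ∃ M, N = M + 1 := ⟨N - 1, by omega⟩
  have h := inv M
  have hyo := neg_inner_le_young K hσ hτ (x (M+1) - x M) (y (M+1) - yh)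
  rw [Nat.add_sub_cancel]
  linarith
end

section
/- Let X and Y be real Hilbert spaces, K : X → Y a continuous linear operator with adjoint K*, and τ ∈ ℝ. Then for every (x, y) ∈ X × Y there is exactly one pair (p, q) ∈ X × Y satisfying p + τ K* q = x and q − τ K p = y; moreover this pair satisfies p + τ² K*(K p) = x − τ K* y and q + τ² K(K* q) = y + τ K x, i.e. p = (Id_X + τ²K*K)^{-1}(x − τK*y) and q = (Id_Y + τ²KK*)^{-1}(y + τKx). -/
/-!
Eliminating `q = y + τ K p` from the system leaves the single equation
`(Id + τ² K*K) p = x - τ K* y`. The operator `Id + τ² K*K` is coercive, because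
`⟪p + τ² K*K p, p⟫ = ‖p‖² + τ² ‖K p‖²`, hence bijective by Lax–Milgram
(`bijective_id_add_sq_smul_comp`). This gives existence and uniqueness of `(p, q)`; the two
decoupled equations follow by substituting one equation of the system into the other.
-/

open RealInnerProductSpace

theorem bijective_id_add_sq_smul_comp
    {X Y : Type*} [NormedAddCommGroup X] [InnerProductSpace ℝ X] [CompleteSpace X]
    [NormedAddCommGroup Y] [InnerProductSpace ℝ Y]
    (K : X →L[ℝ] Y) (Kadj : Y →L[ℝ] X)
    (hadj : ∀ (x : X) (y : Y), ⟪Kadj y, x⟫ = ⟪y, K x⟫) (τ : ℝ) :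
    Function.Bijective fun p : X => p + (τ^2) • Kadj (K p) := by
  let T : X →L[ℝ] X := ContinuousLinearMap.id ℝ X + (τ^2) • Kadj.comp K
  have hT : IsUnit T := by
    refine ContinuousLinearMap.isUnit_of_forall_le_norm_inner_map T (c := 1) one_pos fun p => ?_
    have h : ⟪T p, p⟫ = ‖p‖^2 + τ^2 * ‖K p‖^2 := by
      simp [T, inner_add_left, real_inner_smul_left, hadj]
    rw [h, Real.norm_eq_abs]
    refine le_trans ?_ (le_abs_self _)
    have : 0 ≤ τ^2 * ‖K p‖^2 := by positivity
    simpa using this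
  exact ContinuousLinearMap.isUnit_iff_bijective.mp hT

theorem stmt_6
    {X Y : Type*} [NormedAddCommGroup X] [InnerProductSpace ℝ X] [CompleteSpace X]
    [NormedAddCommGroup Y] [InnerProductSpace ℝ Y] [CompleteSpace Y]
    (K : X →L[ℝ] Y) (Kadj : Y →L[ℝ] X)
    (hadj : ∀ (x : X) (y : Y), ⟪Kadj y, x⟫ = ⟪y, K x⟫)
    (τ : ℝ) :
    ∀ (x : X) (y : Y),
      (∃! pq : X × Y, pq.1 + τ • Kadj pq.2 = x ∧ pq.2 - τ • K pq.1 = y) ∧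
      (∀ (p : X) (q : Y), p + τ • Kadj q = x → q - τ • K p = y →
        p + (τ^2) • Kadj (K p) = x - τ • Kadj y ∧
        q + (τ^2) • K (Kadj q) = y + τ • K x) := by
  have decoupled : ∀ (x : X) (y : Y) (p : X) (q : Y), p + τ • Kadj q = x → q - τ • K p = y →
      p + (τ^2) • Kadj (K p) = x - τ • Kadj y ∧
      q + (τ^2) • K (Kadj q) = y + τ • K x := by
    rintro x y p q rfl rfl
    constructor
    · simp only [map_sub, map_smul]
      module
    · simp only [map_add, map_smul]
      module
  intro x y
  refine ⟨?_, decoupled x y⟩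
  obtain ⟨hinj, hsurj⟩ := bijective_id_add_sq_smul_comp K Kadj hadj τ
  obtain ⟨p, hp⟩ := hsurj (x - τ • Kadj y)
  refine ⟨(p, y + τ • K p), ⟨?_, by simp⟩, ?_⟩
  · rw [eq_sub_iff_add_eq] at hp
    simp only [← hp, map_add, map_smul]
    module
  · rintro ⟨p', q'⟩ ⟨h₁, h₂⟩
    obtain rfl : p' = p := hinj ((decoupled x y p' q' h₁ h₂).1.trans hp.symm)
    rw [← sub_eq_iff_eq_add.mp h₂]
end

section
/- Let X and Y be finite-dimensional real inner product spaces, K : X → Y a continuous linear operator with adjoint K*, and f : X → EReal, g : Y → EReal lower semicontinuous functions that never take the value −∞. Let σ, τ > 0 satisfy στ‖K‖² < 1, suppose there exists (x̂, ŷ) with ŷ ∈ ∂g(K x̂) and −K* ŷ ∈ ∂f(x̂), and let (x^n), (y^n), (x̄^n) be generated by Algorithm 14. Then there exists (x*, y*) with y* ∈ ∂g(K x*) and −K* y* ∈ ∂f(x*) such that x^n → x* and y^n → y*; in particular x* is a minimizer of the function x ↦ f(x) + g(Kx) over X. -/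
/-!
Chambolle–Pock is the proximal point algorithm for the shifted pair `w n = (x n, y (n+1))` in the
metric given by the quadratic form
`q (a, b) = τ⁻¹ ‖a‖² + σ⁻¹ ‖b‖² - 2 ⟪b, K a⟫`, which is positive definite because `σ τ ‖K‖² < 1`.

Monotonicity of the two subdifferentials (`Subgrad.monotone`) yields, for each saddle point `w*`,
the Fejér inequality `q (w (n+1) - w*) + q (w n - w (n+1)) ≤ q (w n - w*)` (`cpForm_fejer`). Hence
the sequence is bounded and its increments tend to zero. By compactness a subsequence converges, and
since subdifferentials of lower semicontinuous functions have closed graphs (`Subgrad.closed`) its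
limit is a saddle point. With that limit as `w*`, the antitone sequence `q (w n - w*)` tends to zero
along a subsequence, hence everywhere, so the whole sequence converges. Convexity of `f` and `g`
plays no role beyond the subgradient inequalities themselves.
-/

open RealInnerProductSpace Filter

/-- `u` is a subgradient of the extended-real-valued function `f` at `x`:
`f x` is finite and `f z ≥ f x + ⟪u, z - x⟫` for all `z`. -/
def Subgrad {Z : Type*} [NormedAddCommGroup Z] [InnerProductSpace ℝ Z]
    (f : Z → EReal) (x u : Z) : Prop :=
  ∃ r : ℝ, f x = (r : EReal) ∧ ∀ z : Z, ((r + ⟪u, z - x⟫ : ℝ) : EReal) ≤ f z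

theorem Subgrad.monotone {Z : Type*} [NormedAddCommGroup Z] [InnerProductSpace ℝ Z]
    {f : Z → EReal} {x u x' u' : Z} (h : Subgrad f x u) (h' : Subgrad f x' u') :
    0 ≤ ⟪u - u', x - x'⟫ := by
  obtain ⟨r, hr, h⟩ := h
  obtain ⟨r', hr', h'⟩ := h'
  have h1 := h x'
  have h2 := h' x
  rw [hr', EReal.coe_le_coe_iff] at h1
  rw [hr, EReal.coe_le_coe_iff] at h2
  rw [← neg_sub x x', inner_neg_right] at h1
  rw [inner_sub_left]
  linarith

/-- The graph of the subdifferential of a lower semicontinuous function is sequentially closed. -/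
theorem Subgrad.closed {Z : Type*} [NormedAddCommGroup Z] [InnerProductSpace ℝ Z]
    {f : Z → EReal} (hlsc : LowerSemicontinuous f) (hbot : ∀ z, f z ≠ ⊥)
    {x u : ℕ → Z} {x' u' : Z} (h : ∀ n, Subgrad f (x n) (u n))
    (hx : Tendsto x atTop (nhds x')) (hu : Tendsto u atTop (nhds u')) :
    Subgrad f x' u' := by
  have key : ∀ (z : Z) (s : ℝ), f z = (s : EReal) →
      f x' ≤ ((s - ⟪u', z - x'⟫ : ℝ) : EReal) := by
    intro z s hs
    by_contra hcon
    obtain ⟨c, hc1, hc2⟩ := EReal.lt_iff_exists_real_btwn.1 (not_le.1 hcon)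
    rw [EReal.coe_lt_coe_iff] at hc1
    have hlim : Tendsto (fun n => s - ⟪u n, z - x n⟫) atTop (nhds (s - ⟪u', z - x'⟫)) :=
      tendsto_const_nhds.sub (hu.inner (tendsto_const_nhds.sub hx))
    have e1 := hlim.eventually (gt_mem_nhds hc1)
    have e2 := hx.eventually (hlsc x' c hc2)
    obtain ⟨n, h1, h2⟩ := (e1.and e2).exists
    obtain ⟨r, hr, hn⟩ := h n
    have h3 := hn z
    rw [hs, EReal.coe_le_coe_iff] at h3
    rw [hr, gt_iff_lt, EReal.coe_lt_coe_iff] at h2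
    linarith
  obtain ⟨r0, hr0, -⟩ := h 0
  have htop : f x' ≠ ⊤ := fun ht => by
    have := key _ _ hr0
    rw [ht] at this
    exact EReal.coe_ne_top _ (top_le_iff.1 this)
  have hfx : f x' = ((f x').toReal : EReal) := (EReal.coe_toReal htop (hbot x')).symm
  refine ⟨(f x').toReal, hfx, fun z => ?_⟩
  by_cases hz : f z = ⊤
  · rw [hz]; exact le_top
  · have hfz : f z = ((f z).toReal : EReal) := (EReal.coe_toReal hz (hbot z)).symm
    have := key z _ hfz
    rw [hfx, EReal.coe_le_coe_iff] at this
    rw [hfz, EReal.coe_le_coe_iff]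
    linarith

section Form

variable {X Y : Type*} [NormedAddCommGroup X] [InnerProductSpace ℝ X]
  [NormedAddCommGroup Y] [InnerProductSpace ℝ Y]

/-- The quadratic form `τ⁻¹ ‖a‖² + σ⁻¹ ‖b‖² - 2 ⟪b, K a⟫` of the metric in which the primal-dual
iteration is a proximal point iteration. -/
noncomputable def cpForm (K : X →L[ℝ] Y) (σ τ : ℝ) (a : X) (b : Y) : ℝ :=
  τ⁻¹ * ‖a‖ ^ 2 + σ⁻¹ * ‖b‖ ^ 2 - 2 * ⟪b, K a⟫

theorem cpForm_inner_le (K : X →L[ℝ] Y) (a : X) (b : Y) : ⟪b, K a⟫ ≤ ‖K‖ * ‖a‖ * ‖b‖ :=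
  calc ⟪b, K a⟫ ≤ ‖b‖ * ‖K a‖ := real_inner_le_norm _ _
    _ ≤ ‖b‖ * (‖K‖ * ‖a‖) := by gcongr; exact K.le_opNorm a
    _ = ‖K‖ * ‖a‖ * ‖b‖ := by ring

theorem cpForm_lower_left (K : X →L[ℝ] Y) {σ τ : ℝ} (hσ : 0 < σ) (a : X) (b : Y) :
    (τ⁻¹ - σ * ‖K‖ ^ 2) * ‖a‖ ^ 2 ≤ cpForm K σ τ a b := by
  have h := cpForm_inner_le K a b
  have h2 : 0 ≤ σ * (σ⁻¹ * ‖b‖ - ‖K‖ * ‖a‖) ^ 2 := by positivity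
  have h3 : σ * (σ⁻¹ * ‖b‖ - ‖K‖ * ‖a‖) ^ 2 =
      σ⁻¹ * ‖b‖ ^ 2 - 2 * (‖K‖ * ‖a‖ * ‖b‖) + σ * ‖K‖ ^ 2 * ‖a‖ ^ 2 := by
    field_simp; ring
  unfold cpForm
  linarith

theorem cpForm_lower_right (K : X →L[ℝ] Y) {σ τ : ℝ} (hτ : 0 < τ) (a : X) (b : Y) :
    (σ⁻¹ - τ * ‖K‖ ^ 2) * ‖b‖ ^ 2 ≤ cpForm K σ τ a b := by
  have h := cpForm_inner_le K a b
  have h2 : 0 ≤ τ * (τ⁻¹ * ‖a‖ - ‖K‖ * ‖b‖) ^ 2 := by positivity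
  have h3 : τ * (τ⁻¹ * ‖a‖ - ‖K‖ * ‖b‖) ^ 2 =
      τ⁻¹ * ‖a‖ ^ 2 - 2 * (‖K‖ * ‖a‖ * ‖b‖) + τ * ‖K‖ ^ 2 * ‖b‖ ^ 2 := by
    field_simp; ring
  unfold cpForm
  linarith

/-- Coercivity of the form: a single constant bounds both squared norms. -/
theorem cpForm_coercive (K : X →L[ℝ] Y) {σ τ : ℝ} (hσ : 0 < σ) (hτ : 0 < τ)
    (hστ : σ * τ * ‖K‖ ^ 2 < 1) :
    ∃ C : ℝ, ∀ (a : X) (b : Y),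
      ‖a‖ ^ 2 ≤ C * cpForm K σ τ a b ∧ ‖b‖ ^ 2 ≤ C * cpForm K σ τ a b := by
  have h1 : 0 < τ⁻¹ - σ * ‖K‖ ^ 2 := by
    rw [sub_pos, inv_eq_one_div, lt_div_iff₀ hτ]; linarith
  have h2 : 0 < σ⁻¹ - τ * ‖K‖ ^ 2 := by
    rw [sub_pos, inv_eq_one_div, lt_div_iff₀ hσ]; linarith
  refine ⟨(τ⁻¹ - σ * ‖K‖ ^ 2)⁻¹ + (σ⁻¹ - τ * ‖K‖ ^ 2)⁻¹, fun a b => ?_⟩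
  have l1 := cpForm_lower_left K (τ := τ) hσ a b
  have l2 := cpForm_lower_right K (σ := σ) hτ a b
  have h0 : 0 ≤ cpForm K σ τ a b := le_trans (by positivity) l1
  rw [← le_inv_mul_iff₀ h1] at l1
  rw [← le_inv_mul_iff₀ h2] at l2
  have p1 := mul_nonneg (inv_pos.2 h1).le h0
  have p2 := mul_nonneg (inv_pos.2 h2).le h0
  constructor <;> linarith

/-- Fejér inequality for one step `(a₀, b₀) ↦ (a, b)`, relative to a saddle point `(xs, ys)`. -/
theorem cpForm_fejer (K : X →L[ℝ] Y) (Kadj : Y →L[ℝ] X)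
    (hadj : ∀ (x : X) (y : Y), ⟪Kadj y, x⟫ = ⟪y, K x⟫)
    {f : X → EReal} {g : Y → EReal} {σ τ : ℝ} (hσ : 0 < σ) (hτ : 0 < τ)
    {a₀ a xs : X} {b₀ b ys : Y}
    (hg : Subgrad g (σ⁻¹ • (b₀ + σ • K ((2:ℝ) • a - a₀) - b)) b)
    (hf : Subgrad f a (τ⁻¹ • (a₀ - τ • Kadj b₀ - a)))
    (hgs : Subgrad g (K xs) ys) (hfs : Subgrad f xs (-Kadj ys)) :
    cpForm K σ τ (a - xs) (b - ys) + cpForm K σ τ (a₀ - a) (b₀ - b) ≤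
      cpForm K σ τ (a₀ - xs) (b₀ - ys) := by
  obtain ⟨p, rfl⟩ : ∃ p, a₀ = a + p := ⟨a₀ - a, by abel⟩
  obtain ⟨q, rfl⟩ : ∃ q, b₀ = b + q := ⟨b₀ - b, by abel⟩
  obtain ⟨d, rfl⟩ : ∃ d, a = xs + d := ⟨a - xs, by abel⟩
  obtain ⟨e, rfl⟩ : ∃ e, b = ys + e := ⟨b - ys, by abel⟩
  have mf := hf.monotone hfs
  have mg := hg.monotone hgs
  have e1 : τ⁻¹ • (xs + d + p - τ • Kadj (ys + e + q) - (xs + d)) - -Kadj ys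
      = τ⁻¹ • p - Kadj (e + q) := by
    have : xs + d + p - τ • Kadj (ys + e + q) - (xs + d) = p - τ • Kadj (ys + e + q) := by abel
    rw [this, smul_sub, inv_smul_smul₀ hτ.ne', add_assoc, map_add]
    abel
  have e2 : σ⁻¹ • (ys + e + q + σ • K ((2:ℝ) • (xs + d) - (xs + d + p)) - (ys + e)) - K xs
      = σ⁻¹ • q + (K d - K p) := by
    have h1 : ys + e + q + σ • K ((2:ℝ) • (xs + d) - (xs + d + p)) - (ys + e)
      = q + σ • K ((2:ℝ) • (xs + d) - (xs + d + p)) := by abel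
    have h2 : (2:ℝ) • (xs + d) - (xs + d + p) = xs + d - p := by rw [two_smul]; abel
    rw [h1, h2, smul_add, inv_smul_smul₀ hσ.ne', map_sub, map_add]
    abel
  have e3 : xs + d - xs = d := by abel
  have e4 : ys + e - ys = e := by abel
  rw [e1, e3, inner_sub_left, hadj, inner_add_left, real_inner_smul_left] at mf
  rw [e2, e4, inner_add_right, inner_sub_right, real_inner_smul_right, real_inner_comm q e] at mg
  have e5 : xs + d + p - (xs + d) = p := by abel
  have e6 : ys + e + q - (ys + e) = q := by abel
  have e7 : xs + d + p - xs = p + d := by abel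
  have e8 : ys + e + q - ys = q + e := by abel
  rw [e3, e4, e5, e6, e7, e8]
  unfold cpForm
  rw [norm_add_sq_real, norm_add_sq_real, map_add, inner_add_left, inner_add_right,
    inner_add_right]
  linarith

end Form

theorem stmt_12
    {X Y : Type*} [NormedAddCommGroup X] [InnerProductSpace ℝ X] [FiniteDimensional ℝ X]
    [NormedAddCommGroup Y] [InnerProductSpace ℝ Y] [FiniteDimensional ℝ Y]
    (K : X →L[ℝ] Y) (Kadj : Y →L[ℝ] X)
    (hadj : ∀ (x : X) (y : Y), ⟪Kadj y, x⟫ = ⟪y, K x⟫)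
    (f : X → EReal) (g : Y → EReal)
    (hf_lsc : LowerSemicontinuous f) (hg_lsc : LowerSemicontinuous g)
    (hf_bot : ∀ z, f z ≠ ⊥) (hg_bot : ∀ z, g z ≠ ⊥)
    (σ τ : ℝ) (hσ : 0 < σ) (hτ : 0 < τ) (hστ : σ * τ * ‖K‖^2 < 1)
    (hopt : ∃ (xh : X) (yh : Y), Subgrad g (K xh) yh ∧ Subgrad f xh (-Kadj yh))
    (x xb : ℕ → X) (y : ℕ → Y)
    (hxb0 : xb 0 = x 0)
    (hy : ∀ n : ℕ, Subgrad g (σ⁻¹ • (y n + σ • K (xb n) - y (n+1))) (y (n+1)))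
    (hx : ∀ n : ℕ, Subgrad f (x (n+1)) (τ⁻¹ • (x n - τ • Kadj (y (n+1)) - x (n+1))))
    (hxbn : ∀ n : ℕ, xb (n+1) = (2:ℝ) • x (n+1) - x n) :
    ∃ (xs : X) (ys : Y), Subgrad g (K xs) ys ∧ Subgrad f xs (-Kadj ys) ∧
      Tendsto x atTop (nhds xs) ∧ Tendsto y atTop (nhds ys) ∧
      ∀ z : X, f xs + g (K xs) ≤ f z + g (K z) := by
  obtain ⟨xh, yh, hgh, hfh⟩ := hopt
  obtain ⟨C, hC⟩ := cpForm_coercive K hσ hτ hστ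
  have hy' : ∀ n, Subgrad g
      (σ⁻¹ • (y (n+1) + σ • K ((2:ℝ) • x (n+1) - x n) - y (n+1+1))) (y (n+1+1)) := by
    intro n
    rw [← hxbn n]
    exact hy (n+1)
  have hnn : ∀ a b, 0 ≤ cpForm K σ τ a b := fun a b => by
    refine le_trans (mul_nonneg ?_ (sq_nonneg ‖a‖)) (cpForm_lower_left K hσ a b)
    rw [sub_nonneg, inv_eq_one_div, le_div_iff₀ hτ]
    linarith
  -- The form controls the norms, so convergence to zero in the form is convergence in norm.
  have hlim : ∀ {a : ℕ → X} {b : ℕ → Y},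
      Tendsto (fun n => cpForm K σ τ (a n) (b n)) atTop (nhds 0) →
      Tendsto a atTop (nhds 0) ∧ Tendsto b atTop (nhds 0) := by
    intro a b h
    have h' : Tendsto (fun n => √(C * cpForm K σ τ (a n) (b n))) atTop (nhds 0) := by
      simpa using (h.const_mul C).sqrt
    exact ⟨squeeze_zero_norm (fun n => Real.le_sqrt_of_sq_le (hC _ _).1) h',
      squeeze_zero_norm (fun n => Real.le_sqrt_of_sq_le (hC _ _).2) h'⟩
  have hfej : ∀ {xs : X} {ys : Y}, Subgrad g (K xs) ys → Subgrad f xs (-Kadj ys) → ∀ n,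
      cpForm K σ τ (x (n+1) - xs) (y (n+1+1) - ys)
        + cpForm K σ τ (x n - x (n+1)) (y (n+1) - y (n+1+1)) ≤
      cpForm K σ τ (x n - xs) (y (n+1) - ys) :=
    fun h1 h2 n => cpForm_fejer K Kadj hadj hσ hτ (hy' n) (hx n) h1 h2
  have hanti : ∀ {xs : X} {ys : Y}, Subgrad g (K xs) ys → Subgrad f xs (-Kadj ys) →
      Antitone fun n => cpForm K σ τ (x n - xs) (y (n+1) - ys) :=
    fun h1 h2 => antitone_nat_of_succ_le fun n => by
      have := hfej h1 h2 n
      have := hnn (x n - x (n+1)) (y (n+1) - y (n+1+1))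
      linarith
  have hVlim := tendsto_atTop_ciInf (hanti hgh hfh) ⟨0, by rintro _ ⟨n, rfl⟩; exact hnn _ _⟩
  have hD : Tendsto (fun n => cpForm K σ τ (x n - x (n+1)) (y (n+1) - y (n+1+1)))
      atTop (nhds 0) := by
    have h1 := hVlim.sub ((tendsto_add_atTop_iff_nat 1).2 hVlim)
    rw [sub_self] at h1
    refine squeeze_zero (fun n => hnn _ _) (fun n => ?_) h1
    have := hfej hgh hfh n
    linarith
  obtain ⟨hdx, hdy⟩ := hlim hD
  obtain ⟨R, hR⟩ : ∃ R : ℝ, ∀ n, cpForm K σ τ (x n - xh) (y (n+1) - yh) ≤ R :=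
    ⟨_, fun n => hanti hgh hfh (Nat.zero_le n)⟩
  have hC0 : ∀ n, C * cpForm K σ τ (x n - xh) (y (n+1) - yh) ≤ |C| * R := fun n =>
    mul_le_mul (le_abs_self C) (hR n) (hnn _ _) (abs_nonneg C)
  have hbd : ∀ n, (x n, y (n+1)) ∈ Metric.closedBall (xh, yh) √(|C| * R) := by
    intro n
    rw [Metric.mem_closedBall, Prod.dist_eq, max_le_iff, dist_eq_norm, dist_eq_norm]
    exact ⟨Real.le_sqrt_of_sq_le ((hC _ _).1.trans (hC0 n)),
      Real.le_sqrt_of_sq_le ((hC _ _).2.trans (hC0 n))⟩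
  obtain ⟨⟨xs, ys⟩, -, φ, hφ, hφlim⟩ :=
    tendsto_subseq_of_bounded Metric.isBounded_closedBall hbd
  have hxφ : Tendsto (fun n => x (φ n)) atTop (nhds xs) :=
    (continuous_fst.tendsto _).comp hφlim
  have hyφ : Tendsto (fun n => y (φ n + 1)) atTop (nhds ys) :=
    (continuous_snd.tendsto _).comp hφlim
  have hdxφ := hdx.comp hφ.tendsto_atTop
  have hdyφ := hdy.comp hφ.tendsto_atTop
  have hxφ1 : Tendsto (fun n => x (φ n + 1)) atTop (nhds xs) := by
    simpa using hxφ.sub hdxφ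
  have hyφ1 : Tendsto (fun n => y (φ n + 1 + 1)) atTop (nhds ys) := by
    simpa using hyφ.sub hdyφ
  -- The subsequential limit is a saddle point, by closedness of both subdifferential graphs.
  have hgs : Subgrad g (K xs) ys := by
    refine Subgrad.closed hg_lsc hg_bot (fun n => hy' (φ n)) ?_ hyφ1
    have hK : Tendsto (fun n => K ((2:ℝ) • x (φ n + 1) - x (φ n))) atTop
        (nhds (K ((2:ℝ) • xs - xs))) :=
      (K.continuous.tendsto _).comp ((hxφ1.const_smul (2:ℝ)).sub hxφ)
    have h := ((hyφ.add (hK.const_smul σ)).sub hyφ1).const_smul σ⁻¹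
    have e : σ⁻¹ • (ys + σ • K ((2:ℝ) • xs - xs) - ys) = K xs := by
      rw [add_sub_cancel_left, inv_smul_smul₀ hσ.ne', two_smul, add_sub_cancel_right]
    rwa [e] at h
  have hfs : Subgrad f xs (-Kadj ys) := by
    refine Subgrad.closed hf_lsc hf_bot (fun n => hx (φ n)) hxφ1 ?_
    have hK : Tendsto (fun n => Kadj (y (φ n + 1))) atTop (nhds (Kadj ys)) :=
      (Kadj.continuous.tendsto _).comp hyφ
    have h := ((hxφ.sub (hK.const_smul τ)).sub hxφ1).const_smul τ⁻¹
    have e : τ⁻¹ • (xs - τ • Kadj ys - xs) = -Kadj ys := by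
      rw [sub_sub_cancel_left, smul_neg, inv_smul_smul₀ hτ.ne']
    rwa [e] at h
  have hV : Tendsto (fun n => cpForm K σ τ (x n - xs) (y (n+1) - ys)) atTop (nhds 0) := by
    have h1 := tendsto_atTop_ciInf (hanti hgs hfs) ⟨0, by rintro _ ⟨n, rfl⟩; exact hnn _ _⟩
    have h2 : Tendsto (fun n => cpForm K σ τ (x (φ n) - xs) (y (φ n + 1) - ys)) atTop
        (nhds 0) := by
      have hc : Continuous fun p : X × Y => cpForm K σ τ (p.1 - xs) (p.2 - ys) := by
        unfold cpForm
        fun_prop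
      have := (hc.tendsto (xs, ys)).comp hφlim
      simpa [cpForm, Function.comp_def] using this
    rwa [tendsto_nhds_unique (h1.comp hφ.tendsto_atTop) h2] at h1
  obtain ⟨hx0, hy0⟩ := hlim hV
  refine ⟨xs, ys, hgs, hfs, tendsto_sub_nhds_zero_iff.1 hx0,
    (tendsto_add_atTop_iff_nat 1).1 (tendsto_sub_nhds_zero_iff.1 hy0), fun z => ?_⟩
  obtain ⟨rg, hrg, hg'⟩ := hgs
  obtain ⟨rf, hrf, hf'⟩ := hfs
  refine le_trans (le_of_eq ?_) (add_le_add (hf' z) (hg' (K z)))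
  -- The two linear terms cancel by adjointness.
  rw [hrf, hrg, ← EReal.coe_add, ← EReal.coe_add, inner_neg_left, hadj, map_sub]
  congr 1
  ring
end
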